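/- Let M_k be a maximum-weight k-matching in a weighted graph G that admits a (k+1)-matching, and let P be an augmenting path relative to M_k with maximum weight-gain wt(P \ M_k) - wt(P ∩ M_k). Then M_k ⊕ P (the symmetric difference) is a maximum-weight (k+1)-matching in G. -/

import Mathlib

open SimpleGraph Finset
open scoped symmDiff

/-- `M` is a matching in `G`: a set of edges of `G`, pairwise vertex-disjoint. -/
def IsMatching {V : Type*} (G : SimpleGraph V) (M : Finset (Sym2 V)) : Prop :=
  (∀ e ∈ M, e ∈ G.edgeSet) ∧
  ∀ e ∈ M, ∀ f ∈ M, e ≠ f → ∀ v : V, v ∈ e → v ∉ f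

/-- `p` is an augmenting path relative to the matching `M`: a simple path whose two
endpoints are uncovered by `M` and whose edges alternate, starting and ending with
edges not in `M`. -/
def IsAugPath {V : Type*} (G : SimpleGraph V) (M : Finset (Sym2 V))
    {u v : V} (p : G.Walk u v) : Prop :=
  p.IsPath ∧ ¬ (∃ e ∈ M, u ∈ e) ∧ ¬ (∃ e ∈ M, v ∈ e) ∧
  Odd p.edges.length ∧
  ∀ (i : ℕ) (h : i < p.edges.length), (p.edges.get ⟨i, h⟩ ∈ M ↔ Odd i)

/-- The weight-gain `wt(P \ M) - wt(P ∩ M)` of an augmenting path with edge list `P`. -/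
def Gain {V : Type*} [DecidableEq V] (wt : Sym2 V → ℝ) (M P : Finset (Sym2 V)) : ℝ :=
  ∑ e ∈ P \ M, wt e - ∑ e ∈ P ∩ M, wt e

/-!
Let `N` be a `(k + 1)`-matching. Since `N` covers more vertices than `Mk`, some augmenting path `Q`
relative to `Mk` lies inside `Mk ∆ N`. Augmenting `Mk` along `Q` gains exactly what switching `N`
along `Q` loses, and `N ∆ Q` is a `k`-matching, so
`wt N = wt (N ∆ Q) + gain Q ≤ wt Mk + gain P = wt (Mk ∆ P)`.
-/

section WeightGain

variable {α R : Type*} [DecidableEq α] [AddCommGroup R]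

/-- The weight-gain `w(P \ M) - w(P ∩ M)` of switching `M` along `P`. It agrees with `Gain` for
real edge weights; the constant weight `1 : α → ℤ` makes it count the change in cardinality. -/
def weightGain (w : α → R) (M P : Finset α) : R :=
  ∑ e ∈ P \ M, w e - ∑ e ∈ P ∩ M, w e

theorem sum_symmDiff_eq_add_weightGain (w : α → R) (M P : Finset α) :
    ∑ e ∈ M ∆ P, w e = ∑ e ∈ M, w e + weightGain w M P := by
  rw [Finset.symmDiff_def, sum_union disjoint_sdiff_sdiff, ← sum_inter_add_sum_sdiff M P w,
    weightGain, inter_comm M P]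
  abel

theorem card_symmDiff_eq_add_weightGain (M P : Finset α) :
    ((M ∆ P).card : ℤ) = M.card + weightGain (1 : α → ℤ) M P := by
  simpa using sum_symmDiff_eq_add_weightGain (1 : α → ℤ) M P

theorem inter_eq_sdiff_of_subset_symmDiff {M N P : Finset α} (h : P ⊆ M ∆ N) :
    P ∩ N = P \ M := by
  ext e
  have := @h e
  grind [mem_symmDiff]

theorem weightGain_eq_neg_of_subset_symmDiff (w : α → R) {M N P : Finset α} (h : P ⊆ M ∆ N) :
    weightGain w N P = -weightGain w M P := by
  rw [weightGain, weightGain, inter_eq_sdiff_of_subset_symmDiff h,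
    ← inter_eq_sdiff_of_subset_symmDiff (symmDiff_comm M N ▸ h), neg_sub]

end WeightGain

section Matching

variable {V : Type*} {G : SimpleGraph V} {M N P : Finset (Sym2 V)}

namespace IsMatching

theorem mono (hM : IsMatching G M) (hNM : N ⊆ M) : IsMatching G N :=
  ⟨fun e he ↦ hM.1 e (hNM he), fun e he f hf ↦ hM.2 e (hNM he) f (hNM hf)⟩

theorem eq_of_mem_of_mem (hM : IsMatching G M) {e f : Sym2 V} (he : e ∈ M) (hf : f ∈ M) {x : V}
    (hxe : x ∈ e) (hxf : x ∈ f) : e = f :=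
  by_contra fun hef ↦ hM.2 e he f hf hef x hxe hxf

theorem symmDiff [DecidableEq V] (hM : IsMatching G M) (hPM : IsMatching G (P \ M))
    (hmeet : ∀ e ∈ M, ∀ f ∈ P \ M, ∀ x ∈ e, x ∈ f → e ∈ P) : IsMatching G (M ∆ P) := by
  simp only [IsMatching, Finset.symmDiff_def, mem_union]
  refine ⟨?_, ?_⟩
  · rintro e (he | he)
    exacts [hM.1 e (mem_sdiff.1 he).1, hPM.1 e he]
  · rintro e (he | he) f (hf | hf) hef x hxe hxf
    · exact hM.2 e (mem_sdiff.1 he).1 f (mem_sdiff.1 hf).1 hef x hxe hxf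
    · exact (mem_sdiff.1 he).2 (hmeet e (mem_sdiff.1 he).1 f hf x hxe hxf)
    · exact (mem_sdiff.1 hf).2 (hmeet f (mem_sdiff.1 hf).1 e he x hxf hxe)
    · exact hPM.2 e he f hf hef x hxe hxf

theorem card_biUnion_toFinset [DecidableEq V] (hM : IsMatching G M) :
    (M.biUnion Sym2.toFinset).card = M.card * 2 := by
  rw [card_biUnion, sum_const_nat]
  · exact fun e he ↦ Sym2.card_toFinset_of_not_isDiag e (G.not_isDiag_of_mem_edgeSet (hM.1 e he))
  · intro e he f hf hef
    simp only [Function.onFun, Finset.disjoint_left, Sym2.mem_toFinset]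
    exact hM.2 e he f hf hef

theorem exists_mk_mem_of_card_lt (hM : IsMatching G M) (hN : IsMatching G N)
    (hcard : M.card < N.card) : ∃ a b, s(a, b) ∈ N ∧ ¬ ∃ e ∈ M, a ∈ e := by
  classical
  obtain ⟨a, haN, haM⟩ : ∃ a ∈ N.biUnion Sym2.toFinset, a ∉ M.biUnion Sym2.toFinset := by
    apply exists_mem_notMem_of_card_lt_card
    rw [hM.card_biUnion_toFinset, hN.card_biUnion_toFinset]
    lia
  simp only [mem_biUnion, Sym2.mem_toFinset] at haN haM
  obtain ⟨e, he, hae⟩ := haN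
  obtain ⟨b, rfl⟩ := Sym2.mem_iff_exists.1 hae
  exact ⟨a, b, he, haM⟩

end IsMatching

theorem isAugPath_of_adj {a b : V} (hab : G.Adj a b) (ha : ¬ ∃ e ∈ M, a ∈ e)
    (hb : ¬ ∃ e ∈ M, b ∈ e) : IsAugPath G M hab.toWalk := by
  refine ⟨by simp [hab.ne], ha, hb, by simp, fun i hi ↦ ?_⟩
  obtain rfl : i = 0 := by simpa using hi
  simpa using fun h ↦ ha ⟨_, h, Sym2.mem_mk_left a b⟩

theorem not_exists_mem_of_not_exists_mem_erase [DecidableEq V] {b c x : V} (hxb : x ≠ b)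
    (hxc : x ≠ c) (hx : ¬ ∃ e ∈ M.erase s(b, c), x ∈ e) : ¬ ∃ e ∈ M, x ∈ e := by
  rintro ⟨e, he, hxe⟩
  refine hx ⟨e, mem_erase.2 ⟨?_, he⟩, hxe⟩
  rintro rfl
  exact (Sym2.mem_iff.1 hxe).elim hxb hxc

namespace IsAugPath

variable {u v : V} {p : G.Walk u v}

theorem odd_length (hp : IsAugPath G M p) : Odd p.length :=
  p.length_edges ▸ hp.2.2.2.1

theorem reverse (hp : IsAugPath G M p) : IsAugPath G M p.reverse := by
  obtain ⟨hpath, hu, hv, hodd, halt⟩ := hp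
  refine ⟨hpath.reverse, hv, hu, by simpa using hodd, fun i hi ↦ ?_⟩
  have hi' : i < p.length := by simpa using hi
  rw [p.length_edges] at hodd
  have hparity : Odd (p.length - 1 - i) ↔ Odd i := by grind
  simpa [hparity] using halt (p.length - 1 - i) (by rw [p.length_edges]; lia)

theorem mk_getVert_mem_iff_odd (hp : IsAugPath G M p) {i : ℕ} (hi : i < p.length) :
    s(p.getVert i, p.getVert (i + 1)) ∈ M ↔ Odd i := by
  simpa [Walk.getElem_edges] using hp.2.2.2.2 i (by simpa using hi)

theorem exists_notMem_of_mem_support (hp : IsAugPath G M p) {x : V} (hx : x ∈ p.support) :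
    ∃ e ∈ p.edges, e ∉ M ∧ x ∈ e := by
  obtain ⟨j, rfl, hj⟩ := Walk.mem_support_iff_exists_getVert.1 hx
  obtain ⟨m, hm⟩ := hp.odd_length
  have hi : 2 * (j / 2) < p.length := by lia
  refine ⟨_, p.mk_mem_edges_iff_exists.2 ⟨_, hi, rfl⟩, by simp [hp.mk_getVert_mem_iff_odd hi], ?_⟩
  obtain h | h : j = 2 * (j / 2) ∨ j = 2 * (j / 2) + 1 := by lia
  all_goals rw [← h]; simp

theorem exists_mem_of_mem_support (hp : IsAugPath G M p) {x : V} (hx : x ∈ p.support)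
    (hxM : ∃ e ∈ M, x ∈ e) : ∃ e ∈ p.edges, e ∈ M ∧ x ∈ e := by
  obtain ⟨j, rfl, hj⟩ := Walk.mem_support_iff_exists_getVert.1 hx
  obtain ⟨m, hm⟩ := hp.odd_length
  have hj0 : j ≠ 0 := by rintro rfl; exact hp.2.1 (by simpa using hxM)
  have hjl : j ≠ p.length := by rintro rfl; exact hp.2.2.1 (by simpa using hxM)
  have hi : 2 * ((j - 1) / 2) + 1 < p.length := by lia
  refine ⟨_, p.mk_mem_edges_iff_exists.2 ⟨_, hi, rfl⟩, by simp [hp.mk_getVert_mem_iff_odd hi], ?_⟩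
  obtain h | h : j = 2 * ((j - 1) / 2) + 1 ∨ j = 2 * ((j - 1) / 2) + 1 + 1 := by lia
  all_goals rw [← h]; simp

variable [DecidableEq V]

theorem exists_mem_of_mem_support_of_subset (hp : IsAugPath G M p)
    (hpN : p.edges.toFinset ⊆ M ∆ N) {x : V} (hx : x ∈ p.support) :
    ∃ e ∈ p.edges, e ∈ N ∧ x ∈ e := by
  obtain ⟨e, he, heM, hxe⟩ := hp.exists_notMem_of_mem_support hx
  have heN : e ∈ p.edges.toFinset ∩ N := by
    simpa [inter_eq_sdiff_of_subset_symmDiff hpN] using ⟨he, heM⟩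
  exact ⟨e, he, (mem_inter.1 heN).2, hxe⟩

theorem notMem_support_of_subset_symmDiff_erase (hp : IsAugPath G M p) (hN : IsMatching G N)
    {e : Sym2 V} (he : e ∈ N) (hpN : p.edges.toFinset ⊆ M ∆ N.erase e) {x : V} (hxe : x ∈ e) :
    x ∉ p.support := by
  intro hx
  obtain ⟨f, -, hf, hxf⟩ := hp.exists_mem_of_mem_support_of_subset hpN hx
  exact (mem_erase.1 hf).1 (hN.eq_of_mem_of_mem (mem_erase.1 hf).2 he hxf hxe)

theorem isMatching_sdiff (hp : IsAugPath G M p) : IsMatching G (p.edges.toFinset \ M) := by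
  refine ⟨fun e he ↦ ?_, fun e he f hf hef x hxe hxf ↦ hef ?_⟩
  · exact p.edges_subset_edgeSet (List.mem_toFinset.1 (mem_sdiff.1 he).1)
  -- An even-indexed edge is determined by the index `j` of either endpoint: it is `2 * (j / 2)`.
  have index_of_mem : ∀ g ∈ p.edges.toFinset \ M, x ∈ g → ∃ j ≤ p.length, p.getVert j = x ∧
      g = s(p.getVert (2 * (j / 2)), p.getVert (2 * (j / 2) + 1)) := by
    intro g hg hxg
    rw [mem_sdiff, List.mem_toFinset] at hg
    induction g with | _ y z
    obtain ⟨i, hi, hyz⟩ := p.mk_mem_edges_iff_exists.1 hg.1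
    rw [← hyz] at hg hxg ⊢
    have hi_even : ¬ Odd i := fun h ↦ hg.2 ((hp.mk_getVert_mem_iff_odd hi).2 h)
    rcases Sym2.mem_iff.1 hxg with h | h
    · exact ⟨i, hi.le, h.symm, by rw [show 2 * (i / 2) = i by grind]⟩
    · exact ⟨i + 1, hi, h.symm, by rw [show 2 * ((i + 1) / 2) = i by grind]⟩
  obtain ⟨i, hi, hxi, rfl⟩ := index_of_mem e he hxe
  obtain ⟨j, hj, hxj, rfl⟩ := index_of_mem f hf hxf
  rw [hp.1.getVert_injOn hi hj (hxi.trans hxj.symm)]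

theorem isMatching_symmDiff (hp : IsAugPath G M p) (hM : IsMatching G M) :
    IsMatching G (M ∆ p.edges.toFinset) := by
  refine hM.symmDiff hp.isMatching_sdiff fun e he f hf x hxe hxf ↦ ?_
  have hx := Walk.mem_support_of_mem_edges (List.mem_toFinset.1 (mem_sdiff.1 hf).1) hxf
  obtain ⟨g, hgp, hgM, hxg⟩ := hp.exists_mem_of_mem_support hx ⟨e, he, hxe⟩
  rw [hM.eq_of_mem_of_mem he hgM hxe hxg]
  exact List.mem_toFinset.2 hgp

theorem isMatching_symmDiff_of_subset (hp : IsAugPath G M p) (hM : IsMatching G M)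
    (hN : IsMatching G N) (hpN : p.edges.toFinset ⊆ M ∆ N) :
    IsMatching G (N ∆ p.edges.toFinset) := by
  refine hN.symmDiff ?_ fun e he f hf x hxe hxf ↦ ?_
  · rw [← inter_eq_sdiff_of_subset_symmDiff (symmDiff_comm M N ▸ hpN)]
    exact hM.mono inter_subset_right
  have hx := Walk.mem_support_of_mem_edges (List.mem_toFinset.1 (mem_sdiff.1 hf).1) hxf
  obtain ⟨g, hgp, hgN, hxg⟩ := hp.exists_mem_of_mem_support_of_subset hpN hx
  rw [hN.eq_of_mem_of_mem he hgN hxe hxg]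
  exact List.mem_toFinset.2 hgp

theorem biUnion_sdiff_eq_support (hp : IsAugPath G M p) :
    (p.edges.toFinset \ M).biUnion Sym2.toFinset = p.support.toFinset := by
  ext x
  simp only [mem_biUnion, mem_sdiff, List.mem_toFinset, Sym2.mem_toFinset]
  constructor
  · rintro ⟨e, ⟨he, -⟩, hxe⟩
    exact Walk.mem_support_of_mem_edges he hxe
  · intro hx
    obtain ⟨e, he, heM, hxe⟩ := hp.exists_notMem_of_mem_support hx
    exact ⟨e, ⟨he, heM⟩, hxe⟩

theorem weightGain_one (hp : IsAugPath G M p) :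
    weightGain (1 : Sym2 V → ℤ) M p.edges.toFinset = 1 := by
  -- The edges outside `M` perfectly match the vertices of the path.
  have hvertices : (p.edges.toFinset \ M).card * 2 = p.length + 1 := by
    rw [← hp.isMatching_sdiff.card_biUnion_toFinset, hp.biUnion_sdiff_eq_support,
      List.toFinset_card_of_nodup hp.1.support_nodup, p.length_support]
  have hedges : (p.edges.toFinset \ M).card + (p.edges.toFinset ∩ M).card = p.length := by
    rw [card_sdiff_add_card_inter, List.toFinset_card_of_nodup hp.1.isTrail.edges_nodup,
      p.length_edges]
  simp only [weightGain, Pi.one_apply, sum_const, nsmul_eq_mul, mul_one]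
  lia

section Erase

variable {a b c : V}

theorem of_erase (hp : IsAugPath G (M.erase s(b, c)) p) (hb : b ∉ p.support) (hu : u ≠ c)
    (hv : v ≠ c) : IsAugPath G M p := by
  refine ⟨hp.1, not_exists_mem_of_not_exists_mem_erase ?_ hu hp.2.1,
    not_exists_mem_of_not_exists_mem_erase ?_ hv hp.2.2.1, hp.2.2.2.1, fun i hi ↦ ?_⟩
  · rintro rfl; exact hb p.start_mem_support
  · rintro rfl; exact hb p.end_mem_support
  · have hne : p.edges.get ⟨i, hi⟩ ≠ s(b, c) := fun h ↦
      hb (p.fst_mem_support_of_mem_edges (h ▸ List.get_mem _ _))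
    rw [← hp.2.2.2.2 i hi, mem_erase, and_iff_right hne]

theorem cons_cons {q : G.Walk c v} (hq : IsAugPath G (M.erase s(b, c)) q) (hab : G.Adj a b)
    (hbc : G.Adj b c) (hbcM : s(b, c) ∈ M) (ha : ¬ ∃ e ∈ M, a ∈ e) (haq : a ∉ q.support)
    (hbq : b ∉ q.support) : IsAugPath G M (.cons hab (.cons hbc q)) := by
  obtain ⟨hpath, -, hv, hodd, halt⟩ := hq
  have hvb : v ≠ b := by rintro rfl; exact hbq q.end_mem_support
  have hvc : v ≠ c := by
    rintro rfl
    simp [Walk.length_eq_zero_iff.2 (Walk.isPath_iff_nil.1 hpath)] at hodd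
  refine ⟨by simp [Walk.cons_isPath_iff, hpath, haq, hbq, hab.ne], ha,
    not_exists_mem_of_not_exists_mem_erase hvb hvc hv, by grind [Walk.edges_cons], ?_⟩
  rintro (_ | _ | i) hi
  · simpa using fun h ↦ ha ⟨_, h, Sym2.mem_mk_left a b⟩
  · simpa using hbcM
  · have hi' : i < q.edges.length := by simpa using hi
    have hne : q.edges[i] ≠ s(b, c) := fun h ↦
      hbq (q.fst_mem_support_of_mem_edges (h ▸ List.getElem_mem hi'))
    simpa [hne, Nat.odd_add] using halt i hi'

theorem exists_of_erase (hp : IsAugPath G (M.erase s(b, c)) p) (hab : G.Adj a b)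
    (hbc : G.Adj b c) (hbcM : s(b, c) ∈ M) (ha : ¬ ∃ e ∈ M, a ∈ e) (hap : a ∉ p.support)
    (hbp : b ∉ p.support) : ∃ (x y : V) (q : G.Walk x y), IsAugPath G M q ∧
      q.edges ⊆ s(a, b) :: s(b, c) :: p.edges := by
  by_cases hu : u = c
  · subst hu
    exact ⟨_, _, _, hp.cons_cons hab hbc hbcM ha hap hbp, by simp⟩
  by_cases hv : v = c
  · subst hv
    exact ⟨_, _, _, hp.reverse.cons_cons hab hbc hbcM ha (by simpa using hap) (by simpa using hbp),
      by simp⟩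
  · exact ⟨u, v, p, hp.of_erase hbp hu hv, by simp⟩

end Erase

end IsAugPath

variable [DecidableEq V]

theorem exists_isAugPath_subset_symmDiff (hM : IsMatching G M) (hN : IsMatching G N)
    (hcard : M.card < N.card) : ∃ (u v : V) (p : G.Walk u v),
      IsAugPath G M p ∧ p.edges.toFinset ⊆ M ∆ N := by
  -- From a vertex `a` covered only by `N`, follow `s(a, b) ∈ N` and `s(b, c) ∈ M`. An augmenting
  -- path for the two matchings without these edges is prolonged to `a` if it ends at `c`, and
  -- kept if not.
  induction M using Finset.strongInduction generalizing N with | H M ih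
  obtain ⟨a, b, habN, ha⟩ := hM.exists_mk_mem_of_card_lt hN hcard
  have hab : G.Adj a b := hN.1 _ habN
  have habM : s(a, b) ∉ M := fun h ↦ ha ⟨_, h, Sym2.mem_mk_left a b⟩
  by_cases hb : ∃ e ∈ M, b ∈ e
  · obtain ⟨e, hbcM, hbe⟩ := hb
    obtain ⟨c, rfl⟩ := Sym2.mem_iff_exists.1 hbe
    have hbcN : s(b, c) ∉ N := fun h ↦
      habM (hN.eq_of_mem_of_mem habN h (Sym2.mem_mk_right a b) hbe ▸ hbcM)
    obtain ⟨x, y, q, hq, hqN⟩ := ih (M.erase s(b, c)) (erase_ssubset hbcM)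
      (hM.mono (erase_subset _ _)) (N := N.erase s(a, b)) (hN.mono (erase_subset _ _))
      (by rw [card_erase_of_mem hbcM, card_erase_of_mem habN]; have := card_pos.2 ⟨_, hbcM⟩; lia)
    have haq : a ∉ q.support :=
      hq.notMem_support_of_subset_symmDiff_erase hN habN hqN (Sym2.mem_mk_left a b)
    have hbq : b ∉ q.support :=
      hq.notMem_support_of_subset_symmDiff_erase hN habN hqN (Sym2.mem_mk_right a b)
    obtain ⟨u, v, p, hp, hpq⟩ := hq.exists_of_erase hab (hM.1 _ hbcM) hbcM ha haq hbq
    refine ⟨u, v, p, hp, fun f hf ↦ ?_⟩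
    obtain rfl | rfl | hfq : f = s(a, b) ∨ f = s(b, c) ∨ f ∈ q.edges := by
      simpa using hpq (List.mem_toFinset.1 hf)
    · simp [mem_symmDiff, habN, habM]
    · simp [mem_symmDiff, hbcN, hbcM]
    · have hbf : b ∉ f := fun h ↦ hbq (Walk.mem_support_of_mem_edges hfq h)
      have hf_ne : f ≠ s(a, b) ∧ f ≠ s(b, c) := by
        constructor <;> rintro rfl <;> simp at hbf
      simpa [mem_symmDiff, hf_ne] using hqN (List.mem_toFinset.2 hfq)
  · exact ⟨a, b, _, isAugPath_of_adj hab ha hb, by simp [mem_symmDiff, habN, habM]⟩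

theorem stmt_10_general {R : Type*} [AddCommGroup R] [PartialOrder R] [IsOrderedAddMonoid R]
    (wt : Sym2 V → R) (hM : IsMatching G M)
    (hMmax : ∀ M' : Finset (Sym2 V), IsMatching G M' → M'.card = M.card →
      ∑ e ∈ M', wt e ≤ ∑ e ∈ M, wt e)
    {u v : V} (p : G.Walk u v) (hp : IsAugPath G M p)
    (hpmax : ∀ (a b : V) (q : G.Walk a b), IsAugPath G M q →
      weightGain wt M q.edges.toFinset ≤ weightGain wt M p.edges.toFinset) :
    IsMatching G (M ∆ p.edges.toFinset) ∧
    (M ∆ p.edges.toFinset).card = M.card + 1 ∧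
    ∀ M' : Finset (Sym2 V), IsMatching G M' → M'.card = M.card + 1 →
      ∑ e ∈ M', wt e ≤ ∑ e ∈ M ∆ p.edges.toFinset, wt e := by
  refine ⟨hp.isMatching_symmDiff hM, ?_, fun N hN hNcard ↦ ?_⟩
  · have := card_symmDiff_eq_add_weightGain M p.edges.toFinset
    rw [hp.weightGain_one] at this
    exact_mod_cast this
  obtain ⟨a, b, q, hq, hqN⟩ := exists_isAugPath_subset_symmDiff hM hN (by lia)
  have hcard : (N ∆ q.edges.toFinset).card = M.card := by
    have := card_symmDiff_eq_add_weightGain N q.edges.toFinset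
    rw [weightGain_eq_neg_of_subset_symmDiff _ hqN, hq.weightGain_one] at this
    lia
  calc ∑ e ∈ N, wt e
      = ∑ e ∈ N ∆ q.edges.toFinset, wt e + weightGain wt M q.edges.toFinset := by
        rw [sum_symmDiff_eq_add_weightGain, weightGain_eq_neg_of_subset_symmDiff wt hqN,
          neg_add_cancel_right]
    _ ≤ ∑ e ∈ M, wt e + weightGain wt M p.edges.toFinset :=
        add_le_add (hMmax _ (hq.isMatching_symmDiff_of_subset hM hN hqN) hcard) (hpmax a b q hq)
    _ = ∑ e ∈ M ∆ p.edges.toFinset, wt e := (sum_symmDiff_eq_add_weightGain wt M _).symm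

end Matching

/-- Let `Mk` be a maximum-weight `k`-matching in a weighted graph `G` admitting a
`(k+1)`-matching, and let `p` be an augmenting path relative to `Mk` of maximum
weight-gain. Then `Mk ⊕ p` is a maximum-weight `(k+1)`-matching in `G`. -/
theorem stmt_10 {V : Type*} [DecidableEq V] (G : SimpleGraph V) (wt : Sym2 V → ℝ)
    (k : ℕ) (Mk : Finset (Sym2 V)) (hMk : IsMatching G Mk) (hMkcard : Mk.card = k)
    (hMkmax : ∀ M' : Finset (Sym2 V), IsMatching G M' → M'.card = k →
      ∑ e ∈ M', wt e ≤ ∑ e ∈ Mk, wt e)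
    (hex : ∃ M' : Finset (Sym2 V), IsMatching G M' ∧ M'.card = k + 1)
    {u v : V} (p : G.Walk u v) (hp : IsAugPath G Mk p)
    (hpmax : ∀ (a b : V) (q : G.Walk a b), IsAugPath G Mk q →
      Gain wt Mk q.edges.toFinset ≤ Gain wt Mk p.edges.toFinset) :
    IsMatching G (Mk ∆ p.edges.toFinset) ∧
    (Mk ∆ p.edges.toFinset).card = k + 1 ∧
    ∀ M' : Finset (Sym2 V), IsMatching G M' → M'.card = k + 1 →
      ∑ e ∈ M', wt e ≤ ∑ e ∈ Mk ∆ p.edges.toFinset, wt e := by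
  subst hMkcard
  exact stmt_10_general wt hMk hMkmax p hp hpmax
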